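/- Let G be any of the three minimal 8-vertex Lemke graphs L, L₁, L₂, and let H be either the complete graph K₁₂ on 12 vertices or the complete bipartite graph K_{6,6}. Then the pebbling number of the Cartesian product satisfies π(G□H) = 96. -/

import Mathlib

open SimpleGraph Finset

/-- A single pebbling move on `G`: remove two pebbles from a vertex `v` with at least two
pebbles and add one pebble to an adjacent vertex `w`. -/
def PebblingMove {V : Type*} (G : SimpleGraph V) (c c' : V → ℕ) : Prop :=
  ∃ v w, G.Adj v w ∧ 2 ≤ c v ∧ c' v = c v - 2 ∧ c' w = c w + 1 ∧
    ∀ u, u ≠ v → u ≠ w → c' u = c u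

/-- Some finite sequence of pebbling moves starting from `c` places at least `t` pebbles
on the vertex `r`. -/
def NSolvable {V : Type*} (G : SimpleGraph V) (c : V → ℕ) (r : V) (t : ℕ) : Prop :=
  ∃ c', Relation.ReflTransGen (PebblingMove G) c c' ∧ t ≤ c' r

/-- A configuration `c` is `r`-solvable. -/
def Solvable {V : Type*} (G : SimpleGraph V) (c : V → ℕ) (r : V) : Prop :=
  NSolvable G c r 1

/-- The pebbling number `π(G)`: least `k` such that every configuration of size `k` is
`r`-solvable for every root `r`. -/
noncomputable def pebblingNumber {V : Type*} (G : SimpleGraph V) [Fintype V] : ℕ :=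
  sInf {k | ∀ c : V → ℕ, (∑ v, c v) = k → ∀ r, Solvable G c r}

/-- The 2-pebbling number `π₂(G, s)`: least `m` such that for every root `r`, every
configuration of size at least `m` with support of size exactly `s` can place two pebbles
on `r`. -/
noncomputable def twoPebblingNumber {V : Type*} (G : SimpleGraph V) [Fintype V] (s : ℕ) : ℕ :=
  sInf {m | ∀ (r : V) (c : V → ℕ), m ≤ ∑ v, c v →
    (Finset.univ.filter fun v => 1 ≤ c v).card = s → NSolvable G c r 2}

/-- The Lemke graph `L` on vertices `v1, …, v8` (as `0, …, 7`). -/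
def lemkeL : SimpleGraph (Fin 8) :=
  SimpleGraph.fromRel fun a b =>
    (a, b) ∈ ([(0, 1), (0, 2), (1, 3), (2, 4), (2, 5), (2, 6), (3, 4), (3, 5), (3, 6),
      (3, 7), (4, 7), (5, 7), (6, 7)] : List (Fin 8 × Fin 8))

/-- The minimal Lemke graph `L₁`. -/
def lemkeL1 : SimpleGraph (Fin 8) :=
  SimpleGraph.fromRel fun a b =>
    (a, b) ∈ ([(0, 1), (0, 2), (1, 2), (1, 3), (2, 4), (2, 5), (2, 6), (3, 4), (3, 7),
      (4, 7), (5, 7), (6, 7)] : List (Fin 8 × Fin 8))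

/-- The minimal Lemke graph `L₂`. -/
def lemkeL2 : SimpleGraph (Fin 8) :=
  SimpleGraph.fromRel fun a b =>
    (a, b) ∈ ([(0, 1), (0, 2), (1, 3), (2, 4), (2, 5), (2, 6), (3, 4), (3, 6), (3, 7),
      (4, 5), (4, 7), (5, 6), (5, 7), (6, 7)] : List (Fin 8 × Fin 8))


namespace Peb

/-- Weak reachability: from `c` one can reach a configuration dominating `d`. -/
def W {V : Type*} (G : SimpleGraph V) (c d : V → ℕ) : Prop :=
  ∃ c', Relation.ReflTransGen (PebblingMove G) c c' ∧ d ≤ c'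

section
variable {V : Type*} {G : SimpleGraph V}

lemma move_add {c c' : V → ℕ} (e : V → ℕ) (h : PebblingMove G c c') :
    PebblingMove G (c + e) (c' + e) := by
  obtain ⟨v, w, hvw, h2, hv, hw, hu⟩ := h
  refine ⟨v, w, hvw, ?_, ?_, ?_, ?_⟩
  · simp only [Pi.add_apply]; omega
  · simp only [Pi.add_apply]; omega
  · simp only [Pi.add_apply]; omega
  · intro u h1 h2
    simp only [Pi.add_apply, hu u h1 h2]

lemma reach_add {c c' : V → ℕ} (e : V → ℕ)
    (h : Relation.ReflTransGen (PebblingMove G) c c') :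
    Relation.ReflTransGen (PebblingMove G) (c + e) (c' + e) := by
  induction h with
  | refl => exact .refl
  | tail _ hm ih => exact ih.tail (move_add e hm)

lemma W.of_le {c d : V → ℕ} (h : d ≤ c) : W G c d := ⟨c, .refl, h⟩

lemma reach_mono {c c' d : V → ℕ} (h : Relation.ReflTransGen (PebblingMove G) c c')
    (hd : c ≤ d) : W G d c' := by
  have := reach_add (d - c) h
  rw [add_tsub_cancel_of_le hd] at this
  exact ⟨_, this, le_self_add⟩

lemma W.trans {a b c : V → ℕ} (h1 : W G a b) (h2 : W G b c) : W G a c := by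
  obtain ⟨b', hb, hle⟩ := h1
  obtain ⟨c', hc, hle'⟩ := h2
  obtain ⟨d, hd, hle''⟩ := reach_mono hc hle
  exact ⟨d, hb.trans hd, hle'.trans hle''⟩

lemma W.add {a b c d : V → ℕ} (h1 : W G a b) (h2 : W G c d) : W G (a + c) (b + d) := by
  obtain ⟨b', hb, hle⟩ := h1
  obtain ⟨d', hd, hle'⟩ := h2
  refine ⟨b' + d', (reach_add c hb).trans ?_, add_le_add hle hle'⟩
  have := reach_add b' hd
  rwa [add_comm c, add_comm d'] at this

lemma W.sum {ι : Type*} (s : Finset ι) {a b : ι → V → ℕ} (h : ∀ i ∈ s, W G (a i) (b i)) :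
    W G (∑ i ∈ s, a i) (∑ i ∈ s, b i) := by
  classical
  induction s using Finset.induction_on with
  | empty => exact W.of_le le_rfl
  | insert i s hi ih =>
    rw [sum_insert hi, sum_insert hi]
    exact (h i (mem_insert_self _ _)).add (ih fun j hj => h j (mem_insert_of_mem hj))

variable [DecidableEq V]

lemma W.move1 {v w : V} (h : G.Adj v w) : W G (Pi.single v 2) (Pi.single w 1) := by
  have hne : v ≠ w := h.ne
  refine ⟨Pi.single w 1, .single ⟨v, w, h, ?_, ?_, ?_, ?_⟩, le_rfl⟩
  · simp
  · simp [hne]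
  · simp [hne.symm]
  · intro u h1 h2
    simp [h1, h2]

lemma W.move {v w : V} (h : G.Adj v w) (k : ℕ) :
    W G (Pi.single v (2 * k)) (Pi.single w k) := by
  induction k with
  | zero => exact W.of_le (by simp)
  | succ k ih =>
    have := ih.add (W.move1 h)
    rwa [← Pi.single_add, ← Pi.single_add] at this

lemma nsolvable_of_W {c : V → ℕ} {r : V} {t : ℕ} (h : W G c (Pi.single r t)) :
    NSolvable G c r t := by
  obtain ⟨c', hc, hle⟩ := h
  exact ⟨c', hc, by simpa using hle r⟩

lemma W_of_nsolvable {c : V → ℕ} {r : V} {t : ℕ} (h : t ≤ c r) :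
    W G c (Pi.single r t) := by
  refine W.of_le fun x => ?_
  by_cases hx : x = r
  · subst hx; simpa using h
  · simp [hx]

/-- Between `a` and `c` there is a configuration of any intermediate size. -/
lemma exists_between [Fintype V] {a c : V → ℕ} (hac : a ≤ c) (m : ℕ) (h1 : ∑ v, a v ≤ m)
    (h2 : m ≤ ∑ v, c v) : ∃ b, a ≤ b ∧ b ≤ c ∧ ∑ v, b v = m := by
  induction m, h1 using Nat.le_induction with
  | base => exact ⟨a, le_rfl, hac, rfl⟩
  | succ m _ ih =>
    obtain ⟨b, hab, hbc, hb⟩ := ih (by omega)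
    obtain ⟨x, hx⟩ : ∃ x, b x < c x := by
      by_contra! hcon
      have := Finset.sum_le_sum (fun x (_ : x ∈ univ) => hcon x)
      omega
    refine ⟨b + Pi.single x 1, hab.trans le_self_add, ?_, ?_⟩
    · intro y
      by_cases hy : y = x
      · subst hy; simpa using hx
      · simpa [hy] using hbc y
    · simp [sum_add_distrib, hb]

end

/-- The three properties of the first factor that are used. -/
structure Facts (G : SimpleGraph (Fin 8)) : Prop where
  one : ∀ (c : Fin 8 → ℕ) r, 8 ≤ ∑ v, c v → W G c (Pi.single r 1)
  two : ∀ (c : Fin 8 → ℕ) r, 24 ≤ ∑ v, c v + 2 * min (#{v | 1 ≤ c v}) 7 →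
    W G c (Pi.single r 2)
  full : ∀ v r, W G (1 + Pi.single v 1) (Pi.single r 2)

section product
variable {β : Type*} [DecidableEq β] {H : SimpleGraph β} {G : SimpleGraph (Fin 8)}

/-- Put a configuration of `G` on the column `h`. -/
def lift (h : β) (a : Fin 8 → ℕ) : Fin 8 × β → ℕ := fun x => if x.2 = h then a x.1 else 0

lemma lift_add (h : β) (a b : Fin 8 → ℕ) : lift h (a + b) = lift h a + lift h b := by
  funext x; simp only [lift, Pi.add_apply]; split_ifs <;> rfl

lemma lift_single (h : β) (v : Fin 8) (k : ℕ) :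
    lift h (Pi.single v k) = Pi.single (v, h) k := by
  funext ⟨x, y⟩
  simp only [lift, Pi.single_apply, Prod.mk.injEq]
  by_cases hy : y = h <;> by_cases hx : x = v <;> simp [hx, hy]

lemma lift_sum {ι : Type*} (s : Finset ι) (h : β) (a : ι → Fin 8 → ℕ) :
    lift h (∑ i ∈ s, a i) = ∑ i ∈ s, lift h (a i) := by
  funext x
  simp only [lift, Finset.sum_apply]
  split_ifs
  · rfl
  · simp

lemma lift_mono (h : β) {a b : Fin 8 → ℕ} (hab : a ≤ b) : lift h a ≤ lift h b := by
  intro x; simp only [lift]; split_ifs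
  · exact hab _
  · exact le_rfl

lemma W.lift {a b : Fin 8 → ℕ} (hab : W G a b) (h : β) :
    W (G.boxProd H) (lift h a) (lift h b) := by
  obtain ⟨b', hb, hle⟩ := hab
  refine W.trans ?_ (W.of_le (lift_mono h hle))
  refine ⟨Peb.lift h b', ?_, le_rfl⟩
  clear hle
  induction hb with
  | refl => exact .refl
  | tail _ hm ih =>
    refine ih.tail ?_
    obtain ⟨v, w, hvw, h2, hv, hw, hu⟩ := hm
    refine ⟨(v, h), (w, h), ?_, ?_, ?_, ?_, ?_⟩
    · simp [SimpleGraph.boxProd_adj, hvw]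
    · simpa [Peb.lift] using h2
    · simpa [Peb.lift] using hv
    · simpa [Peb.lift] using hw
    · rintro ⟨x, y⟩ h1 h2
      simp only [Peb.lift]
      by_cases hy : y = h
      · subst hy
        simp only [if_true]
        exact hu x (by rintro rfl; exact h1 rfl) (by rintro rfl; exact h2 rfl)
      · simp [hy]

lemma sum_single_eq (a : Fin 8 → ℕ) : a = ∑ x, Pi.single x (a x) :=
  (Finset.univ_sum_single a).symm

/-- Move everything from column `h` to an adjacent column. -/
lemma W.shift {h h' : β} (hh : H.Adj h h') (a : Fin 8 → ℕ) :
    W (G.boxProd H) (Peb.lift h a) (Peb.lift h' (fun x => a x / 2)) := by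
  have e1 : Peb.lift h (∑ x, Pi.single x (2 * (a x / 2))) ≤ Peb.lift h a := by
    refine lift_mono h ?_
    rw [Finset.univ_sum_single (fun x => 2 * (a x / 2))]
    intro x
    show 2 * (a x / 2) ≤ a x
    omega
  refine (W.of_le e1).trans ?_
  rw [sum_single_eq (fun x => a x / 2), lift_sum, lift_sum]
  refine W.sum _ fun x _ => ?_
  rw [lift_single, lift_single]
  exact W.move (by simp [SimpleGraph.boxProd_adj, hh]) _

/-- The column `h` of a configuration. -/
def col (c : Fin 8 × β → ℕ) (h : β) : Fin 8 → ℕ := fun x => c (x, h)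

/-- Half of a column. -/
def half (c : Fin 8 × β → ℕ) (h : β) : Fin 8 → ℕ := fun x => c (x, h) / 2

/-- If the columns adjacent to `h` are moved onto `h`. -/
lemma W.gather (c : Fin 8 × β → ℕ) (h : β) (S : Finset β) (hS : ∀ s ∈ S, H.Adj s h) :
    W (G.boxProd H) c (Peb.lift h (col c h + ∑ s ∈ S, half c s)) := by
  have hn : h ∉ S := fun hh => (hS h hh).ne rfl
  have e : Peb.lift h (col c h) + ∑ s ∈ S, Peb.lift s (col c s) ≤ c := by
    rintro ⟨x, y⟩
    simp only [Pi.add_apply, Finset.sum_apply, Peb.lift, col]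
    by_cases hy : y = h
    · subst hy
      simp [hn]
    · simp only [hy, if_false, Finset.sum_ite_eq]
      split_ifs <;> simp
  refine (W.of_le e).trans ?_
  rw [lift_add, lift_sum]
  exact (W.of_le le_rfl).add (W.sum _ fun s hs => W.shift (hS s hs) _)

variable [Fintype β]

lemma col_le (c : Fin 8 × β → ℕ) (h : β) :
    ∑ x, col c h x ≤ 2 * ∑ x, half c h x + #{v | 1 ≤ col c h v} := by
  rw [Finset.card_filter, Finset.mul_sum, ← Finset.sum_add_distrib]
  refine Finset.sum_le_sum fun x _ => ?_
  have hh : half c h x = col c h x / 2 := rfl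
  rw [hh]
  by_cases hx : 1 ≤ col c h x
  · rw [if_pos hx]; omega
  · rw [if_neg hx]; omega

lemma supp_le (a : Fin 8 → ℕ) : #{v | 1 ≤ a v} ≤ 8 := by
  simpa using Finset.card_le_univ ({v | 1 ≤ a v} : Finset (Fin 8))

lemma full_of_supp {a : Fin 8 → ℕ} (h : ¬ #{v | 1 ≤ a v} ≤ 7) : ∀ v, 1 ≤ a v := by
  have h8 : #{v | 1 ≤ a v} = Fintype.card (Fin 8) := by
    have := supp_le a
    simp only [Fintype.card_fin]; omega
  have := (Finset.card_eq_iff_eq_univ _).1 h8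
  intro v
  have hv := Finset.mem_univ v
  rw [← this] at hv
  simpa using hv

theorem solvable_main (hG : Facts G) (h0 : β) (A B : Finset β)
    (hsum : ∀ f : β → ℕ, ∑ h, f h = f h0 + ∑ h ∈ A, f h + ∑ h ∈ B, f h)
    (hA : #A = 5) (hB : #B = 6) (h0B : ∀ b ∈ B, H.Adj b h0)
    (hAB : ∀ a ∈ A, ∀ b ∈ B, H.Adj a b)
    (c : Fin 8 × β → ℕ) (hc : ∑ v, c v = 96) (g : Fin 8) :
    W (G.boxProd H) c (Pi.single (g, h0) 1) := by
  by_contra hno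
  have fin2 : ∀ b ∈ B, W (G.boxProd H) c (Pi.single (g, b) 2) → False := fun b hb hw =>
    hno (hw.trans (W.move (by simp [SimpleGraph.boxProd_adj, h0B b hb]) 1))
  have htot : ∑ x, col c h0 x + ∑ h ∈ A, ∑ x, col c h x + ∑ h ∈ B, ∑ x, col c h x = 96 := by
    rw [← hsum fun h => ∑ x, col c h x, ← hc, Fintype.sum_prod_type_right]
    rfl
  -- gathering on the root column
  have H1 : ∑ x, col c h0 x + ∑ b ∈ B, ∑ x, half c b x ≤ 7 := by
    by_contra hcon
    refine hno ((W.gather c h0 B h0B).trans ?_)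
    rw [← lift_single]
    refine (hG.one _ g ?_).lift h0
    simp only [Pi.add_apply, Finset.sum_add_distrib, Finset.sum_apply]
    rw [Finset.sum_comm]
    omega
  -- gathering on a neighbouring column
  have H2 : ∀ b ∈ B, ∑ x, col c b x + ∑ a ∈ A, ∑ x, half c a x
      + 2 * min (#{v | 1 ≤ col c b v}) 7 ≤ 23 := by
    intro b hb
    by_contra hcon
    refine fin2 b hb ((W.gather c b A fun a ha => hAB a ha b hb).trans ?_)
    rw [← lift_single]
    refine (hG.two _ g ?_).lift b
    have hs : #{v | 1 ≤ col c b v} ≤ #{v | 1 ≤ (col c b + ∑ a ∈ A, half c a) v} := by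
      refine Finset.card_le_card fun v hv => ?_
      simp only [Finset.mem_filter, Finset.mem_univ, true_and, Pi.add_apply] at hv ⊢
      omega
    have hm : ∑ x, (col c b + ∑ a ∈ A, half c a) x
        = ∑ x, col c b x + ∑ a ∈ A, ∑ x, half c a x := by
      simp only [Pi.add_apply, Finset.sum_add_distrib, Finset.sum_apply]
      rw [Finset.sum_comm]
    rw [hm]
    omega
  have H2s := Finset.sum_le_sum H2
  simp only [Finset.sum_add_distrib, Finset.sum_const, hB, smul_eq_mul, ← Finset.mul_sum] at H2s
  have HB : ∑ b ∈ B, ∑ x, col c b x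
      ≤ 2 * ∑ b ∈ B, ∑ x, half c b x + ∑ b ∈ B, #{v | 1 ≤ col c b v} := by
    rw [Finset.mul_sum, ← Finset.sum_add_distrib]
    exact Finset.sum_le_sum fun b _ => col_le c b
  have HA : ∑ b ∈ A, ∑ x, col c b x
      ≤ 2 * ∑ b ∈ A, ∑ x, half c b x + ∑ b ∈ A, #{v | 1 ≤ col c b v} := by
    rw [Finset.mul_sum, ← Finset.sum_add_distrib]
    exact Finset.sum_le_sum fun b _ => col_le c b
  by_cases hfull : ∀ b ∈ B, #{v | 1 ≤ col c b v} ≤ 7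
  · -- no full column next to the root column
    have e : ∑ b ∈ B, min (#{v | 1 ≤ col c b v}) 7 = ∑ b ∈ B, #{v | 1 ≤ col c b v} :=
      Finset.sum_congr rfl fun b hb => min_eq_left (hfull b hb)
    have hA8 : ∑ a ∈ A, #{v | 1 ≤ col c a v} ≤ 40 := by
      refine (Finset.sum_le_sum fun a _ => supp_le (col c a)).trans ?_
      simp [hA]
    omega
  · push Not at hfull
    obtain ⟨b, hb, hbf⟩ := hfull
    have hbf := full_of_supp (not_le.2 hbf)
    have onele : ∀ h, (∀ v, 1 ≤ col c h v) → Peb.lift h 1 ≤ c := by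
      rintro h hh ⟨x, y⟩
      simp only [Peb.lift]
      split_ifs with hy
      · obtain rfl : y = h := hy
        exact hh x
      · exact Nat.zero_le _
    have twole : ∀ h h', h ≠ h' → (∀ v, 1 ≤ col c h v) → ∀ v, 2 ≤ c (v, h') →
        Peb.lift h 1 + Pi.single (v, h') 2 ≤ c := by
      rintro h h' hne hh v hv ⟨x, y⟩
      have := onele h hh (x, y)
      simp only [Peb.lift, Pi.add_apply, Pi.single_apply, Prod.mk.injEq] at this ⊢
      by_cases hy : y = h
      · have : y ≠ h' := by rw [hy]; exact hne
        simp_all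
      · simp only [hy, if_false, zero_add]
        split_ifs with hx
        · obtain ⟨rfl, rfl⟩ := hx; exact hv
        · exact Nat.zero_le _
    -- a full column plus one pebble
    have fullplus : ∀ h v, W (G.boxProd H) (Peb.lift h 1 + Pi.single (v, h) 1)
        (Pi.single (g, h) 2) := by
      intro h v
      rw [← lift_single, ← lift_single, ← lift_add]
      exact (hG.full v g).lift h
    have nb : ∀ v, c (v, b) ≤ 1 := by
      intro v
      by_contra hv
      refine fin2 b hb ((W.of_le ?_).trans (fullplus b v))
      rintro ⟨x, y⟩
      have := onele b hbf (x, y)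
      simp only [Peb.lift, Pi.add_apply, Pi.single_apply, Prod.mk.injEq] at this ⊢
      by_cases hx : x = v ∧ y = b
      · obtain ⟨rfl, rfl⟩ := hx; simp; omega
      · simp only [hx, if_false]; simpa using this
    have nadj : ∀ h, H.Adj h b → ∀ v, c (v, h) ≤ 1 := by
      intro h hh v
      by_contra hv
      refine fin2 b hb ((W.of_le (twole b h hh.ne.symm hbf v (by omega))).trans ?_)
      exact ((W.of_le le_rfl).add (W.move (w := (v, b))
        (by simp [SimpleGraph.boxProd_adj, hh]) 1)).trans (fullplus b v)
    have halfA : ∀ h, H.Adj h b → ∑ x, half c h x = 0 := by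
      intro h hh
      refine Finset.sum_eq_zero fun x _ => ?_
      have := nadj h hh x
      simp only [half]; omega
    have hA0 : ∑ a ∈ A, ∑ x, half c a x = 0 :=
      Finset.sum_eq_zero fun a ha => halfA a (hAB a ha b hb)
    by_cases hAf : ∀ a ∈ A, #{v | 1 ≤ col c a v} ≤ 7
    · have h35 : ∑ a ∈ A, #{v | 1 ≤ col c a v} ≤ 35 := by
        refine (Finset.sum_le_sum hAf).trans ?_
        simp [hA]
      have h12 : ∑ b ∈ B, #{v | 1 ≤ col c b v}
          ≤ ∑ b ∈ B, min (#{v | 1 ≤ col c b v}) 7 + 6 := by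
        have : ∑ b ∈ B, #{v | 1 ≤ col c b v}
            ≤ ∑ b ∈ B, (min (#{v | 1 ≤ col c b v}) 7 + 1) := by
          refine Finset.sum_le_sum fun b _ => ?_
          have := supp_le (col c b)
          omega
        rw [Finset.sum_add_distrib] at this
        simpa [hB] using this
      omega
    · push Not at hAf
      obtain ⟨a, ha, haf⟩ := hAf
      have haf := full_of_supp (not_le.2 haf)
      have hB1 : ∀ b' ∈ B, ∀ v, c (v, b') ≤ 1 := by
        intro b' hb' v
        by_contra hv
        have hne : b' ≠ b := by rintro rfl; exact hv (nb v)
        have hab' : H.Adj b' a := (hAB a ha b' hb').symm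
        have hab : H.Adj a b := hAB a ha b hb
        refine fin2 b hb ?_
        have hle : (Peb.lift a 1 + Pi.single (v, b') 2) + Pi.single (g, b) 1 ≤ c := by
          rintro ⟨x, y⟩
          have h1 := twole a b' hab'.ne.symm haf v (by omega) (x, y)
          rw [Pi.add_apply]
          by_cases hx : (x, y) = (g, b)
          · rw [hx]
            have h2 := hbf g
            simp only [col] at h2
            simpa [Peb.lift, hab.ne.symm, hne.symm] using h2
          · rw [Pi.single_eq_of_ne hx]
            exact h1
        refine (W.of_le hle).trans ?_
        have m1 : W (G.boxProd H) (Peb.lift a 1 + Pi.single (v, b') 2) (Pi.single (g, b) 1) :=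
          (((W.of_le le_rfl).add (W.move (w := (v, a))
            (by simp [SimpleGraph.boxProd_adj, hab']) 1)).trans (fullplus a v)).trans
            (W.move (by simp [SimpleGraph.boxProd_adj, hab]) 1)
        have := m1.add (W.of_le (G := G.boxProd H) (le_refl (Pi.single (g, b) 1)))
        rwa [← Pi.single_add] at this
      have hB0 : ∑ b ∈ B, ∑ x, half c b x = 0 := by
        refine Finset.sum_eq_zero fun b' hb' => Finset.sum_eq_zero fun x _ => ?_
        have := hB1 b' hb' x
        simp only [half]; omega
      have h00 : #{v | 1 ≤ col c h0 v} ≤ 7 := by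
        by_contra hcon
        refine hno (W_of_nsolvable ?_)
        exact full_of_supp hcon g
      have hA8 : ∑ a ∈ A, #{v | 1 ≤ col c a v} ≤ 40 := by
        refine (Finset.sum_le_sum fun a _ => supp_le (col c a)).trans ?_
        simp [hA]
      have hB8 : ∑ a ∈ B, #{v | 1 ≤ col c a v} ≤ 48 := by
        refine (Finset.sum_le_sum fun a _ => supp_le (col c a)).trans ?_
        simp [hB]
      omega

end product

section number

lemma pebbling_eq {V : Type*} [Fintype V] [DecidableEq V] (G : SimpleGraph V)
    (hV : Fintype.card V = 96)
    (h : ∀ c : V → ℕ, ∑ v, c v = 96 → ∀ r, W G c (Pi.single r 1)) :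
    pebblingNumber G = 96 := by
  have hmem : (96 : ℕ) ∈ {k | ∀ c : V → ℕ, (∑ v, c v) = k → ∀ r, Solvable G c r} :=
    fun c hc r => nsolvable_of_W (h c hc r)
  refine le_antisymm (Nat.sInf_le hmem) ?_
  refine le_csInf ⟨_, hmem⟩ ?_
  intro k hk
  by_contra hlt
  have : Nonempty V := Fintype.card_pos_iff.1 (by omega)
  obtain ⟨r⟩ := this
  have hcard : k ≤ #(univ.erase r) := by
    rw [Finset.card_erase_of_mem (mem_univ r), Finset.card_univ]; omega
  obtain ⟨s, hs, hsk⟩ := Finset.exists_subset_card_eq hcard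
  obtain ⟨c', hc', hr⟩ := hk (fun v => if v ∈ s then 1 else 0) (by simp [hsk]) r
  rcases hc'.cases_head with heq | ⟨d, ⟨v, w, -, h2, -⟩, -⟩
  · rw [← heq] at hr
    have : r ∉ s := fun h => by simpa using hs h
    simp [this] at hr
  · dsimp only at h2
    split_ifs at h2 <;> omega

lemma pebbling_top {G : SimpleGraph (Fin 8)} (hG : Facts G) :
    pebblingNumber (G.boxProd (⊤ : SimpleGraph (Fin 12))) = 96 := by
  refine pebbling_eq _ (by simp) ?_
  rintro c hc ⟨g, h0⟩
  obtain ⟨A, hAs, hA⟩ := Finset.exists_subset_card_eq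
    (show 5 ≤ #(univ.erase h0) by simp)
  refine solvable_main hG h0 A (univ.erase h0 \ A) ?_ hA ?_ ?_ ?_ c hc g
  · intro f
    rw [add_assoc, add_comm (∑ h ∈ A, f h), Finset.sum_sdiff hAs,
      Finset.add_sum_erase _ _ (mem_univ h0)]
  · rw [Finset.card_sdiff_of_subset hAs, hA]; simp
  · intro b hb
    simp only [Finset.mem_sdiff, Finset.mem_erase] at hb
    simpa using hb.1.1
  · intro a ha b hb
    simp only [Finset.mem_sdiff] at hb
    rw [SimpleGraph.top_adj]
    rintro rfl
    exact hb.2 ha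

lemma pebbling_bip {G : SimpleGraph (Fin 8)} (hG : Facts G) :
    pebblingNumber (G.boxProd (completeBipartiteGraph (Fin 6) (Fin 6))) = 96 := by
  refine pebbling_eq _ (by simp) ?_
  rintro c hc ⟨g, h0 | h0⟩
  · refine solvable_main hG (Sum.inl h0) ((univ.erase h0).map ⟨Sum.inl, Sum.inl_injective⟩)
      (univ.map ⟨Sum.inr, Sum.inr_injective⟩) ?_ (by simp) (by simp) ?_ ?_ c hc g
    · intro f
      rw [Fintype.sum_sum_type, Finset.sum_map, Finset.sum_map,
        ← Finset.add_sum_erase _ _ (mem_univ h0)]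
      rfl
    · simp
    · simp
  · refine solvable_main hG (Sum.inr h0) ((univ.erase h0).map ⟨Sum.inr, Sum.inr_injective⟩)
      (univ.map ⟨Sum.inl, Sum.inl_injective⟩) ?_ (by simp) (by simp) ?_ ?_ c hc g
    · intro f
      rw [Fintype.sum_sum_type, Finset.sum_map, Finset.sum_map, add_comm,
        ← Finset.add_sum_erase _ _ (mem_univ h0)]
      rfl
    · simp
    · simp

end number

section computation

/-- Push at most `k` pebbles from `v` to `w`, where `m = (v, w, k)`; configurations are packed in
base 32. -/
def push (n : ℕ) (m : ℕ × ℕ × ℕ) : ℕ :=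
  (fun v w x => Nat.add (Nat.sub n (Nat.mul x (Nat.mul 2 v))) (Nat.mul x w))
    (Nat.pow 32 m.1) (Nat.pow 32 m.2.1)
    ((fun k y => cond (Nat.ble k y) k y) m.2.2
      (Nat.div (Nat.mod (Nat.div n (Nat.pow 32 m.1)) 32) 2))

/-- Run a strategy. -/
def run (S : List (ℕ × ℕ × ℕ)) : ℕ → ℕ :=
  List.rec (motive := fun _ => ℕ → ℕ) (fun n => n) (fun m _ ih n => ih (push n m)) S

/-- Adjacency test on natural numbers. -/
def adjB (E : List (Fin 8 × Fin 8)) (v w : ℕ) : Bool :=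
  E.any fun e => !(v == w) && ((e.1.val == v && e.2.val == w) || (e.1.val == w && e.2.val == v))

/-- Does one of the strategies put `t` pebbles on `r`? -/
def win (SS : List (List (ℕ × ℕ × ℕ))) (r t n : ℕ) : Bool :=
  List.rec (motive := fun _ => Bool) false
    (fun S _ ih => cond (Nat.ble t (Nat.mod (Nat.div (run S n) (Nat.pow 32 r)) 32)) true ih) SS

/-- Sum of a list. -/
def tot (B : List ℕ) : ℕ := List.rec (motive := fun _ => ℕ) 0 (fun u _ ih => Nat.add u ih) B

/-- Check all configurations bounded by `B` (in reversed order), of size `m` with support `s`. -/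
def enum (f : ℕ → Bool) (B : List ℕ) : ℕ → ℕ → ℕ → Bool :=
  List.rec (motive := fun _ => ℕ → ℕ → ℕ → Bool)
    (fun m s n => cond (Nat.ble m 0) (cond (Nat.ble s 0) (f n) true) true)
    (fun u B ih m s n =>
      cond (Nat.ble s m) (cond (Nat.ble m (Nat.add u (tot B)))
        (cond (ih m s (Nat.mul n 32)) (cond (Nat.ble s 0) true
          (Nat.rec (motive := fun _ => Bool) true
            (fun x r => cond (ih (Nat.sub m (Nat.succ x)) (Nat.sub s 1)
              (Nat.add (Nat.mul n 32) (Nat.succ x))) r false)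
            (cond (Nat.ble u m) u m))) false) true) true) B

/-- The full test for one root. -/
def checkRoot (E : List (Fin 8 × Fin 8)) (r : ℕ) (D : List ℕ)
    (SS : List (List (ℕ × ℕ × ℕ))) : Bool :=
  Nat.beq D.length 8 &&
  (SS.all fun S => S.all fun m => adjB E m.1 m.2.1) &&
  ((List.range 8).all fun v => Nat.ble (D.getD v 0) 31 && win SS r 1 (D.getD v 0 * 32 ^ v)) &&
  ((List.range 8).all fun v => win SS r 2 ((32 ^ 8 - 1) / 31 + 32 ^ v)) &&
  ((List.range 9).all fun s => enum (win SS r 1) (D.map (· - 1)).reverse 8 s 0) &&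
  ([5, 6, 7].all fun s => enum (win SS r 2)
    (D.map fun d => if d + 8 ≤ 24 - 2 * s then d - 1 else 24).reverse (24 - 2 * s) s 0)

/-- The full test for a graph. -/
def checkGraph (E : List (Fin 8 × Fin 8))
    (data : List (List ℕ × List (List (ℕ × ℕ × ℕ)))) : Bool :=
  (List.range 8).all fun r => checkRoot E r (data.getD r ([], [])).1 (data.getD r ([], [])).2

variable {E : List (Fin 8 × Fin 8)}

/-- The graph with edge list `E`. -/
abbrev gr (E : List (Fin 8 × Fin 8)) : SimpleGraph (Fin 8) :=
  SimpleGraph.fromRel fun a b => (a, b) ∈ E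

lemma adjB_spec {v w : ℕ} (h : adjB E v w = true) :
    ∃ (hv : v < 8) (hw : w < 8), (gr E).Adj ⟨v, hv⟩ ⟨w, hw⟩ := by
  simp only [adjB, List.any_eq_true, Bool.and_eq_true, Bool.or_eq_true, beq_iff_eq,
    Bool.not_eq_true', beq_eq_false_iff_ne] at h
  obtain ⟨⟨a, b⟩, he, hne, ⟨rfl, rfl⟩ | ⟨rfl, rfl⟩⟩ := h
  · exact ⟨a.2, b.2, by simpa [SimpleGraph.fromRel_adj, Fin.ext_iff] using ⟨hne, Or.inl he⟩⟩
  · exact ⟨b.2, a.2, by simpa [SimpleGraph.fromRel_adj, Fin.ext_iff] using ⟨hne, Or.inr he⟩⟩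

/-- The number `n` encodes the configuration `c`. -/
def Rel (n : ℕ) (c : Fin 8 → ℕ) : Prop := n = ∑ i, c i * 32 ^ i.val ∧ ∑ i, c i < 32

lemma Rel.digit {n : ℕ} {c : Fin 8 → ℕ} (h : Rel n c) (v : Fin 8) :
    n / 32 ^ v.val % 32 = c v := by
  obtain ⟨h1, h2⟩ := h
  rw [Fin.sum_univ_eight] at h1 h2
  simp only [Fin.coe_ofNat_eq_mod] at h1
  norm_num at h1
  fin_cases v
  · change n / 1 % 32 = c 0; omega
  · change n / 32 % 32 = c 1; omega
  · change n / 1024 % 32 = c 2; omega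
  · change n / 32768 % 32 = c 3; omega
  · change n / 1048576 % 32 = c 4; omega
  · change n / 33554432 % 32 = c 5; omega
  · change n / 1073741824 % 32 = c 6; omega
  · change n / 34359738368 % 32 = c 7; omega

lemma push_sound {n : ℕ} {c : Fin 8 → ℕ} (h : Rel n c) {m : ℕ × ℕ × ℕ}
    (hm : adjB E m.1 m.2.1 = true) : ∃ c', Rel (push n m) c' ∧ W (gr E) c c' := by
  obtain ⟨v, w, k⟩ := m
  obtain ⟨hv, hw, hadj⟩ := adjB_spec hm
  dsimp only at hv hw hadj
  obtain ⟨x, hx⟩ : ∃ x, x = cond (Nat.ble k (n / 32 ^ v % 32 / 2)) k (n / 32 ^ v % 32 / 2) :=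
    ⟨_, rfl⟩
  have hp : push n (v, w, k) = n - x * (2 * 32 ^ v) + x * 32 ^ w := by
    rw [hx]; rfl
  have hd := h.digit ⟨v, hv⟩
  dsimp only at hd
  rw [hd] at hx
  have hx2 : 2 * x ≤ c ⟨v, hv⟩ := by
    rw [hx]
    by_cases hk : Nat.ble k (c ⟨v, hv⟩ / 2) = true
    · rw [hk, cond_true]
      have := Nat.le_of_ble_eq_true hk
      omega
    · rw [Bool.eq_false_iff.2 hk, cond_false]
      omega
  obtain ⟨d, hcd⟩ : ∃ d : Fin 8 → ℕ,
      c = d + (Pi.single (⟨v, hv⟩ : Fin 8) (2 * x) : Fin 8 → ℕ) := by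
    refine ⟨c - Pi.single ⟨v, hv⟩ (2 * x), (tsub_add_cancel_of_le ?_).symm⟩
    intro i
    by_cases hi : i = ⟨v, hv⟩
    · subst hi; simpa using hx2
    · simp [hi]
  have hsingle : ∀ (u : Fin 8) (y : ℕ),
      ∑ i : Fin 8, (Pi.single u y : Fin 8 → ℕ) i * 32 ^ i.val = y * 32 ^ u.val := by
    intro u y
    simp [Pi.single_apply]
  refine ⟨d + Pi.single ⟨w, hw⟩ x, ⟨?_, ?_⟩, ?_⟩
  · rw [hp, h.1, hcd]
    simp only [Pi.add_apply, add_mul, Finset.sum_add_distrib, hsingle]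
    rw [show 2 * x * 32 ^ v = x * (2 * 32 ^ v) by ring, Nat.add_sub_cancel]
  · have := h.2
    rw [hcd] at this
    simp only [Pi.add_apply, Finset.sum_add_distrib, Finset.sum_pi_single', Finset.mem_univ,
      if_true] at this ⊢
    omega
  · rw [hcd]
    exact (W.of_le le_rfl).add (W.move hadj x)

lemma run_sound {S : List (ℕ × ℕ × ℕ)} : ∀ {n : ℕ} {c : Fin 8 → ℕ}, Rel n c →
    (S.all fun m => adjB E m.1 m.2.1) = true → ∃ c', Rel (run S n) c' ∧ W (gr E) c c' := by
  induction S with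
  | nil => intro n c h _; exact ⟨c, h, W.of_le le_rfl⟩
  | cons m S ih =>
    intro n c h hS
    rw [List.all_cons, Bool.and_eq_true] at hS
    obtain ⟨c', hc', hw⟩ := push_sound h hS.1
    obtain ⟨c'', hc'', hw'⟩ := ih hc' hS.2
    exact ⟨c'', hc'', hw.trans hw'⟩

lemma cond_or {a b : Bool} (h : cond a true b = true) : a = true ∨ b = true := by
  cases a
  · exact Or.inr h
  · exact Or.inl rfl

lemma win_sound {SS : List (List (ℕ × ℕ × ℕ))} {n : ℕ} {c : Fin 8 → ℕ} (hl : Rel n c) {t : ℕ}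
    (hS : (SS.all fun S => S.all fun m => adjB E m.1 m.2.1) = true) {r : Fin 8}
    (h : win SS r t n = true) : W (gr E) c (Pi.single r t) := by
  induction SS with
  | nil => exact absurd h (by simp [win])
  | cons S SS ih =>
    rw [List.all_cons, Bool.and_eq_true] at hS
    rcases cond_or (a := Nat.ble t (run S n / 32 ^ r.val % 32)) (b := win SS r t n) h with h | h
    · obtain ⟨c', hc', hw⟩ := run_sound hl hS.1
      rw [hc'.digit] at h
      exact hw.trans (W_of_nsolvable (Nat.le_of_ble_eq_true h))
    · exact ih hS.2 h

lemma cond_imp {a b : Bool} (h : cond a b true = true) (ha : a = true) : b = true := by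
  rw [ha] at h; exact h

lemma cond_and {a b : Bool} (h : cond a b false = true) : a = true ∧ b = true := by
  cases a
  · exact absurd h (by simp)
  · exact ⟨rfl, h⟩

lemma loop_spec {p : ℕ → Bool} {k : ℕ}
    (h : Nat.rec (motive := fun _ => Bool) true (fun x r => cond (p x) r false) k = true) :
    ∀ x < k, p x = true := by
  induction k with
  | zero => intro x hx; omega
  | succ k ih =>
    have := cond_and (a := p k) h
    intro x hx
    rcases Nat.lt_succ_iff_lt_or_eq.1 hx with hx | rfl
    · exact ih this.2 x hx
    · exact this.1

lemma sum_le_tot {l B : List ℕ} (h : List.Forall₂ (· ≤ ·) l B) : l.sum ≤ tot B := by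
  induction h with
  | nil => exact le_rfl
  | @cons x u l B hx _ ih =>
    rw [List.sum_cons]
    show x + l.sum ≤ u + tot B
    omega

lemma enum_spec {f : ℕ → Bool} {B : List ℕ} : ∀ {m s n : ℕ},
    enum f B m s n = true → ∀ l : List ℕ, List.Forall₂ (· ≤ ·) l B → l.sum = m →
    (l.map fun x => if 1 ≤ x then 1 else 0).sum = s →
    f (l.foldl (fun n x => n * 32 + x) n) = true := by
  induction B with
  | nil =>
    intro m s n h l hl hm hs
    cases hl
    simp only [List.sum_nil, List.map_nil] at hm hs
    subst hm hs
    exact h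
  | cons u B ih =>
    intro m s n h l hl hm hs
    cases hl with
    | @cons x _ l _ hx hl =>
    simp only [List.sum_cons, List.map_cons] at hm hs
    have hcount : (l.map fun x => if 1 ≤ x then 1 else 0).sum ≤ l.sum := by
      clear hm hs hl ih
      induction l with
      | nil => simp
      | cons y l ih =>
        simp only [List.map_cons, List.sum_cons]
        by_cases hy : 1 ≤ y
        · rw [if_pos hy]; omega
        · rw [if_neg hy]; omega
    have hms : s ≤ m := by
      by_cases hx1 : 1 ≤ x
      · rw [if_pos hx1] at hs; omega
      · rw [if_neg hx1] at hs; omega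
    have hmt : m ≤ u + tot B := by
      have := sum_le_tot hl
      omega
    have h1 := cond_imp h (Nat.ble_eq_true_of_le hms)
    have h2 := cond_imp h1 (Nat.ble_eq_true_of_le hmt)
    obtain ⟨ha, hb⟩ := cond_and h2
    rw [List.foldl_cons]
    cases x with
    | zero => exact ih ha l hl (by omega) (by simpa using hs)
    | succ x =>
      rw [if_pos (by omega)] at hs
      rcases cond_or hb with h0 | hb
      · have := Nat.le_of_ble_eq_true h0
        omega
      · have := loop_spec hb x (by
          cases hum : Nat.ble u m
          · rw [cond_false]; omega
          · rw [cond_true]; omega)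
        exact ih this l hl (by rw [← hm]; simp) (by rw [← hs]; simp)

lemma enum_fun {f : ℕ → Bool} {B : List ℕ} (hB : B.length = 8) {m s : ℕ}
    (h : enum f B.reverse m s 0 = true) (c : Fin 8 → ℕ)
    (hc : ∀ i : Fin 8, c i ≤ B.getD i.val 0) (hm : ∑ i, c i = m)
    (hs : #{i | 1 ≤ c i} = s) : f (∑ i, c i * 32 ^ i.val) = true := by
  have := enum_spec h (List.ofFn c).reverse ?_ ?_ ?_
  · have e : (List.ofFn c).reverse.foldl (fun n x => n * 32 + x) 0 = ∑ i, c i * 32 ^ i.val := by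
      rw [Fin.sum_univ_eight]
      simp [List.ofFn_succ]
      ring_nf
    rwa [e] at this
  · rw [List.forall₂_reverse_iff, List.forall₂_iff_get]
    refine ⟨by rw [List.length_ofFn, hB], ?_⟩
    intro i h1 h2
    have := hc ⟨i, by rw [← hB]; exact h2⟩
    simp only [List.getD_eq_getElem?_getD, List.getElem?_eq_getElem h2, Option.getD_some] at this
    rw [List.get_ofFn]
    exact this
  · rw [List.sum_reverse, List.sum_ofFn, hm]
  · rw [List.map_reverse, List.sum_reverse, List.map_ofFn, List.sum_ofFn, ← hs,
      Finset.card_filter]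
    rfl

lemma rel_single (v : Fin 8) (d : ℕ) (hd : d ≤ 31) :
    Rel (d * 32 ^ v.val) (fun i => if i = v then d else 0) := by
  refine ⟨?_, ?_⟩
  · simp
  · simp; omega

lemma rel_ones (v : Fin 8) :
    Rel ((32 ^ 8 - 1) / 31 + 32 ^ v.val) (1 + Pi.single v 1) := by
  revert v
  unfold Rel
  decide +kernel

lemma facts_of_check {data : List (List ℕ × List (List (ℕ × ℕ × ℕ)))}
    (h : checkGraph E data = true) : Facts (gr E) := by
  have hroot : ∀ r : Fin 8, ∃ D SS, checkRoot E r D SS = true := fun r =>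
    ⟨_, _, (List.all_eq_true.1 h) r.val (List.mem_range.2 r.2)⟩
  have one : ∀ (c : Fin 8 → ℕ) r, 8 ≤ ∑ v, c v → W (gr E) c (Pi.single r 1) := by
    intro c r hc
    obtain ⟨D, SS, hch⟩ := hroot r
    simp only [checkRoot, Bool.and_eq_true] at hch
    obtain ⟨⟨⟨⟨⟨hD, hS⟩, hsing⟩, -⟩, h1⟩, -⟩ := hch
    replace hD := Nat.eq_of_beq_eq_true hD
    by_cases hbig : ∃ v : Fin 8, D.getD v.val 0 ≤ c v
    · obtain ⟨v, hv⟩ := hbig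
      have hv1 := List.all_eq_true.1 hsing v.val (List.mem_range.2 v.2)
      rw [Bool.and_eq_true] at hv1
      have := win_sound (rel_single v _ (Nat.le_of_ble_eq_true hv1.1)) hS hv1.2
      refine (W.of_le ?_).trans this
      intro i
      by_cases hi : i = v
      · subst hi; simpa using hv
      · simp [hi]
    · push Not at hbig
      obtain ⟨b, -, hbc, hb⟩ := exists_between (a := 0) (c := c) (fun _ => Nat.zero_le _) 8
        (by simp) hc
      have hs : #{i | 1 ≤ b i} ≤ 8 := supp_le b
      have hen := List.all_eq_true.1 h1 _ (List.mem_range.2 (Nat.lt_succ_of_le hs))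
      have hw := enum_fun (by simpa using hD) hen b ?_ hb rfl
      · have := win_sound ⟨rfl, by omega⟩ hS hw
        exact (W.of_le hbc).trans this
      · intro i
        have h1 := hbig i
        have h2 : b i ≤ c i := hbc i
        have hlt : i.val < D.length := by rw [hD]; exact i.2
        simp only [List.getD_eq_getElem?_getD, List.getElem?_map,
          List.getElem?_eq_getElem hlt, Option.map_some, Option.getD_some] at h1 ⊢
        omega
  have full : ∀ v r, W (gr E) (1 + Pi.single v 1) (Pi.single r 2) := by
    intro v r
    obtain ⟨D, SS, hch⟩ := hroot r
    simp only [checkRoot, Bool.and_eq_true] at hch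
    obtain ⟨⟨⟨⟨⟨hD, hS⟩, -⟩, hsing⟩, -⟩, -⟩ := hch
    exact win_sound (rel_ones v) hS (List.all_eq_true.1 hsing v.val (List.mem_range.2 v.2))
  have split : ∀ (a c : Fin 8 → ℕ) r, a ≤ c → W (gr E) a (Pi.single r 1) →
      8 + ∑ v, a v ≤ ∑ v, c v → W (gr E) c (Pi.single r 2) := by
    intro a c r hac ha hsum
    have hs : ∑ v, c v = ∑ v, a v + ∑ v, (c - a) v := by
      rw [← Finset.sum_add_distrib]
      refine Finset.sum_congr rfl fun v _ => ?_
      have : a v ≤ c v := hac v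
      simp only [Pi.sub_apply]; omega
    have := ha.add (one (c - a) r (by omega))
    rwa [add_tsub_cancel_of_le hac, ← Pi.single_add] at this
  refine ⟨one, ?_, full⟩
  intro c r hc
  rcases Nat.lt_or_ge (#{v | 1 ≤ c v}) 5 with hs | hs
  · obtain ⟨b, -, hbc, hb⟩ := exists_between (a := 0) (c := c) (fun _ => Nat.zero_le _) 8
      (by simp) (by omega)
    exact split b c r hbc (one b r hb.ge) (by omega)
  · by_cases hs8 : #{v | 1 ≤ c v} ≤ 7
    · obtain ⟨D, SS, hch⟩ := hroot r
      simp only [checkRoot, Bool.and_eq_true] at hch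
      obtain ⟨⟨⟨⟨⟨hD, hS⟩, hsing⟩, -⟩, -⟩, h2⟩ := hch
      replace hD := Nat.eq_of_beq_eq_true hD
      set s := #{v | 1 ≤ c v} with hsdef
      obtain ⟨b, hab, hbc, hb⟩ := exists_between (a := fun v => if 1 ≤ c v then 1 else 0)
        (c := c) (by
          intro v
          by_cases hv : 1 ≤ c v
          · simp [hv]
          · simp [hv]) (24 - 2 * s) (by
          rw [← Finset.card_filter, ← hsdef]; omega) (by omega)
      have hbs : #{v | 1 ≤ b v} = s := by
        rw [hsdef]
        congr 1
        ext v
        simp only [Finset.mem_filter, Finset.mem_univ, true_and]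
        have h1 := hab v
        have h2 : b v ≤ c v := hbc v
        dsimp only at h1
        by_cases hv : 1 ≤ c v
        · rw [if_pos hv] at h1; omega
        · omega
      refine (W.of_le hbc).trans ?_
      by_cases hbig : ∃ v : Fin 8, D.getD v.val 0 ≤ b v ∧ D.getD v.val 0 + 8 ≤ 24 - 2 * s
      · obtain ⟨v, hv, hv8⟩ := hbig
        have hv1 := List.all_eq_true.1 hsing v.val (List.mem_range.2 v.2)
        rw [Bool.and_eq_true] at hv1
        have := win_sound (rel_single v _ (Nat.le_of_ble_eq_true hv1.1)) hS hv1.2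
        refine split _ b r ?_ this ?_
        · intro i
          by_cases hi : i = v
          · subst hi; simpa using hv
          · simp [hi]
        · rw [hb]
          simp only [Finset.sum_ite_eq', Finset.mem_univ, if_true]
          omega
      · push Not at hbig
        have hen := List.all_eq_true.1 h2 s (by
          simp only [List.mem_cons, List.not_mem_nil, or_false]; omega)
        have hw := enum_fun (by simpa using hD) hen b ?_ hb hbs
        · exact win_sound ⟨rfl, by omega⟩ hS hw
        · intro i
          have h1 := hbig i
          have hlt : i.val < D.length := by rw [hD]; exact i.2
          have hle : b i ≤ 24 - 2 * s := by
            rw [← hb]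
            exact Finset.single_le_sum (fun _ _ => Nat.zero_le _) (mem_univ i)
          simp only [List.getD_eq_getElem?_getD, List.getElem?_map,
            List.getElem?_eq_getElem hlt, Option.map_some, Option.getD_some] at h1 ⊢
          split_ifs <;> omega
    · have hf := full_of_supp hs8
      obtain ⟨v, hv⟩ : ∃ v, 2 ≤ c v := by
        by_contra! hcon
        have h8 : ∑ v, c v ≤ ∑ _v : Fin 8, 1 :=
          Finset.sum_le_sum fun v _ => Nat.le_of_lt_succ (hcon v)
        simp at h8
        omega
      refine (W.of_le ?_).trans (full v r)
      intro i
      by_cases hi : i = v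
      · subst hi; simpa using hv
      · simpa [hi] using hf i

/-- Certificate for `L`: for each root, the powers `2 ^ dist` and a list of strategies. -/
def dataL : List (List ℕ × List (List (ℕ × ℕ × ℕ))) := [
  ([1, 2, 2, 4, 4, 4, 4, 8], [
    [(5, 2, 9), (7, 6, 9), (3, 1, 9), (4, 2, 9), (6, 2, 9), (2, 0, 9), (1, 0, 9)],
    [(7, 4, 1), (7, 6, 9), (3, 5, 9), (6, 2, 9), (5, 2, 9), (4, 2, 9), (2, 0, 9), (1, 0, 9)],
    [(7, 3, 1), (7, 6, 9), (4, 2, 1), (4, 3, 9), (6, 2, 9), (5, 2, 1), (5, 3, 9), (3, 1, 9), (2, 0, 9), (1, 0, 9)],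
    [(4, 3, 9), (7, 3, 9), (6, 2, 1), (6, 3, 9), (5, 3, 9), (3, 1, 9), (2, 0, 9), (1, 0, 9)],
    [(7, 3, 2), (7, 6, 9), (5, 3, 9), (4, 2, 9), (3, 1, 1), (3, 6, 9), (6, 2, 9), (1, 0, 9), (2, 0, 9)],
    [(7, 5, 1), (7, 6, 9), (5, 2, 9), (3, 6, 9), (6, 2, 9), (4, 2, 9), (2, 0, 9), (1, 0, 9)],
    [(7, 4, 1), (7, 5, 9), (6, 3, 9), (4, 2, 9), (3, 1, 1), (3, 5, 9), (5, 2, 9), (1, 0, 9), (2, 0, 9)],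
    [(7, 3, 1), (7, 4, 1), (7, 5, 9), (3, 6, 9), (4, 2, 9), (5, 2, 9), (6, 2, 9), (2, 0, 9)],
    [(7, 3, 1), (7, 4, 1), (7, 5, 1), (3, 1, 1), (4, 2, 1), (5, 2, 1), (1, 0, 1), (2, 0, 1)],
    [(7, 3, 3), (7, 4, 1), (3, 1, 2), (4, 2, 1), (6, 2, 1), (1, 0, 1), (2, 0, 1)]]),
  ([2, 1, 4, 2, 4, 4, 4, 4], [
    [(5, 3, 2), (5, 2, 9), (7, 3, 9), (2, 0, 9), (6, 3, 9), (4, 3, 9), (0, 1, 9), (3, 1, 9)],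
    [(7, 4, 9), (5, 3, 9), (6, 2, 2), (6, 3, 9), (4, 2, 1), (4, 3, 9), (2, 0, 9), (0, 1, 9), (3, 1, 9)],
    [(7, 3, 1), (7, 5, 9), (6, 3, 9), (4, 2, 9), (5, 2, 1), (5, 3, 9), (2, 0, 9), (0, 1, 9), (3, 1, 9)],
    [(7, 3, 9), (5, 3, 9), (2, 6, 1), (2, 0, 9), (4, 3, 9), (6, 3, 9), (3, 1, 9), (0, 1, 9)],
    [(6, 2, 1), (6, 3, 9), (5, 3, 9), (4, 7, 9), (2, 0, 9), (7, 3, 9), (0, 1, 9), (3, 1, 9)]]),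
  ([2, 4, 1, 4, 2, 2, 2, 4], [
    [(7, 6, 9), (1, 0, 9), (3, 6, 9), (4, 2, 9), (0, 2, 9), (6, 2, 9), (5, 2, 9)],
    [(1, 3, 1), (1, 0, 9), (3, 5, 1), (3, 7, 9), (7, 4, 1), (7, 5, 9), (6, 2, 9), (4, 2, 9), (0, 2, 9), (5, 2, 9)]]),
  ([4, 2, 4, 1, 2, 2, 2, 2], [
    [(2, 4, 1), (2, 6, 9), (0, 1, 9), (6, 3, 9), (4, 3, 9), (7, 3, 9), (5, 3, 9), (1, 3, 9)],
    [(0, 2, 1), (0, 1, 9), (2, 6, 9), (1, 3, 9), (4, 3, 2), (4, 7, 9), (5, 7, 9), (7, 6, 9), (6, 3, 9)]]),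
  ([4, 4, 2, 2, 1, 4, 4, 2], [
    [(1, 3, 9), (6, 3, 2), (6, 2, 9), (5, 3, 9), (0, 2, 9), (7, 4, 1), (7, 3, 9), (3, 4, 9), (2, 4, 9)],
    [(1, 0, 1), (1, 3, 9), (5, 7, 1), (5, 2, 9), (0, 2, 9), (6, 2, 9), (7, 4, 9), (3, 4, 9), (2, 4, 9)],
    [(0, 1, 9), (1, 3, 9), (6, 7, 1), (6, 3, 9), (5, 3, 1), (5, 7, 9), (2, 4, 9), (7, 4, 9), (3, 4, 9)],
    [(0, 1, 1), (0, 2, 1), (1, 3, 1), (2, 4, 1), (3, 4, 1)]]),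
  ([4, 4, 2, 2, 4, 1, 4, 2], [
    [(1, 3, 9), (0, 2, 9), (4, 3, 1), (4, 7, 9), (6, 3, 9), (7, 5, 9), (3, 5, 9), (2, 5, 9)],
    [(6, 2, 1), (6, 7, 9), (1, 0, 1), (1, 3, 9), (0, 2, 9), (4, 7, 9), (2, 5, 9), (3, 7, 9), (7, 5, 9)],
    [(0, 1, 1), (0, 2, 9), (1, 3, 9), (6, 7, 9), (4, 3, 9), (2, 5, 9), (7, 5, 9), (3, 5, 9)]]),
  ([4, 4, 2, 2, 4, 4, 1, 2], [
    [(0, 2, 9), (1, 3, 9), (4, 3, 1), (4, 7, 9), (5, 3, 9), (3, 6, 2), (3, 7, 9), (7, 6, 9), (2, 6, 9)],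
    [(4, 2, 2), (4, 7, 9), (1, 0, 1), (1, 3, 9), (5, 7, 1), (5, 3, 9), (0, 2, 9), (2, 6, 9), (3, 6, 9), (7, 6, 9)],
    [(0, 1, 1), (0, 2, 9), (1, 3, 9), (5, 3, 9), (4, 7, 1), (4, 2, 9), (7, 6, 1), (7, 3, 9), (3, 6, 9), (2, 6, 9)]]),
  ([8, 4, 4, 2, 2, 2, 2, 1], [
    [(0, 1, 2), (0, 2, 9), (2, 5, 2), (2, 6, 9), (1, 3, 9), (4, 7, 9), (6, 7, 1), (6, 3, 9), (5, 7, 9), (3, 7, 9)],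
    [(0, 2, 9), (1, 3, 9), (2, 4, 9), (6, 7, 1), (6, 3, 9), (5, 3, 9), (3, 7, 2), (3, 4, 9), (4, 7, 9)],
    [(0, 2, 9), (2, 6, 1), (2, 4, 9), (1, 3, 9), (3, 5, 1), (3, 6, 9), (5, 7, 9), (6, 7, 9), (4, 7, 9)],
    [(0, 1, 1), (0, 2, 9), (2, 5, 9), (1, 3, 9), (5, 7, 9), (6, 7, 1), (6, 3, 9), (4, 7, 2), (4, 3, 9), (3, 7, 9)],
    [(0, 1, 3), (1, 3, 2), (3, 7, 1)],
    [(0, 2, 1), (1, 0, 1), (0, 2, 1), (2, 4, 1), (4, 7, 1)],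
    [(1, 0, 1), (0, 2, 1), (1, 3, 1), (2, 4, 1), (3, 5, 1), (4, 7, 1), (5, 7, 1)]])]

/-- Certificate for `L1`: for each root, the powers `2 ^ dist` and a list of strategies. -/
def dataL1 : List (List ℕ × List (List (ℕ × ℕ × ℕ))) := [
  ([1, 2, 2, 4, 4, 4, 4, 8], [
    [(7, 6, 9), (6, 2, 9), (5, 2, 9), (3, 1, 9), (4, 2, 9), (2, 0, 9), (1, 0, 9)],
    [(7, 3, 2), (7, 5, 9), (4, 2, 9), (3, 1, 9), (5, 2, 9), (6, 2, 9), (1, 0, 9), (2, 0, 9)],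
    [(7, 5, 1), (7, 6, 9), (5, 2, 9), (6, 2, 9), (3, 4, 9), (4, 2, 9), (2, 0, 9), (1, 0, 9)],
    [(7, 3, 1), (7, 6, 9), (4, 3, 1), (4, 2, 9), (6, 2, 9), (5, 2, 9), (3, 1, 9), (1, 0, 1), (1, 2, 9), (2, 0, 9)],
    [(7, 4, 1), (7, 5, 9), (5, 2, 9), (3, 1, 1), (3, 4, 9), (6, 2, 9), (4, 2, 9), (1, 0, 9), (2, 0, 9)],
    [(7, 6, 1), (7, 4, 9), (6, 2, 9), (5, 2, 9), (3, 4, 9), (4, 2, 9), (1, 0, 1), (1, 2, 9), (2, 0, 9)],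
    [(7, 3, 3), (3, 1, 2), (1, 0, 1)],
    [(3, 1, 1), (6, 7, 1), (7, 3, 1), (3, 1, 1), (1, 0, 1)],
    [(3, 1, 1), (5, 7, 1), (7, 3, 1), (3, 1, 1), (1, 0, 1)],
    [(6, 2, 1), (6, 7, 1), (7, 3, 1), (3, 1, 1), (1, 0, 1), (2, 0, 1)],
    [(5, 2, 1), (6, 7, 1), (7, 3, 1), (3, 1, 1), (1, 0, 1), (2, 0, 1)],
    [(5, 2, 1), (5, 7, 1), (7, 3, 1), (3, 1, 1), (1, 0, 1), (2, 0, 1)],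
    [(7, 3, 1), (7, 4, 1), (7, 5, 1), (3, 7, 1), (7, 6, 1), (4, 2, 1), (5, 2, 1), (6, 2, 1), (2, 0, 2)],
    [(7, 3, 1), (7, 4, 1), (7, 5, 9), (3, 1, 9), (4, 2, 9), (5, 2, 9), (1, 0, 9), (2, 0, 9)],
    [(7, 3, 3), (7, 4, 1), (7, 5, 1), (3, 1, 2), (4, 2, 1), (5, 2, 1), (1, 0, 1), (2, 0, 1)]]),
  ([2, 1, 2, 2, 4, 4, 4, 4], [
    [(5, 2, 1), (5, 7, 9), (6, 2, 1), (6, 7, 9), (4, 2, 1), (4, 7, 9), (7, 3, 9), (2, 1, 9), (0, 1, 9), (3, 1, 9)],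
    [(7, 5, 1), (7, 3, 9), (5, 2, 9), (4, 3, 9), (6, 2, 9), (3, 1, 9), (0, 2, 1), (0, 1, 9), (2, 1, 9)],
    [(6, 2, 9), (5, 7, 9), (7, 3, 1), (7, 4, 9), (4, 3, 1), (4, 2, 9), (2, 1, 9), (0, 1, 9), (3, 1, 9)],
    [(5, 7, 9), (4, 2, 9), (6, 7, 1), (6, 2, 9), (7, 3, 9), (0, 1, 1), (0, 2, 9), (3, 1, 9), (2, 1, 9)]]),
  ([2, 2, 1, 4, 2, 2, 2, 4], [
    [(7, 4, 9), (3, 4, 9), (4, 2, 9), (5, 2, 9), (0, 2, 9), (1, 2, 9), (6, 2, 9)],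
    [(3, 1, 1), (3, 4, 9), (7, 5, 1), (7, 6, 9), (6, 2, 9), (5, 2, 9), (0, 1, 9), (4, 2, 9), (1, 2, 9)]]),
  ([4, 2, 4, 1, 2, 4, 4, 2], [
    [(2, 1, 9), (6, 7, 9), (0, 1, 9), (5, 7, 9), (1, 3, 9), (7, 3, 9), (4, 3, 9)],
    [(0, 2, 1), (0, 1, 9), (5, 2, 9), (6, 7, 9), (2, 4, 1), (2, 1, 9), (1, 3, 9), (4, 3, 1), (4, 7, 9), (7, 3, 9)],
    [(6, 2, 1), (6, 7, 9), (5, 2, 9), (0, 1, 9), (2, 1, 9), (7, 3, 9), (4, 3, 9), (1, 3, 9)],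
    [(6, 7, 2), (6, 2, 9), (0, 1, 9), (5, 7, 1), (5, 2, 9), (2, 4, 1), (2, 1, 9), (1, 3, 9), (7, 3, 9), (4, 3, 9)],
    [(0, 2, 1), (6, 2, 1), (2, 4, 1), (4, 3, 1)]]),
  ([4, 4, 2, 2, 1, 4, 4, 2], [
    [(5, 2, 9), (6, 2, 9), (0, 2, 9), (1, 2, 9), (3, 4, 1), (3, 7, 9), (2, 4, 9), (7, 4, 9)],
    [(0, 1, 1), (0, 2, 9), (6, 2, 1), (6, 7, 9), (5, 7, 9), (1, 3, 1), (1, 2, 9), (3, 4, 9), (7, 4, 9), (2, 4, 9)],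
    [(1, 3, 9), (5, 7, 1), (5, 2, 9), (6, 7, 9), (3, 7, 1), (3, 4, 9), (0, 2, 9), (7, 4, 9), (2, 4, 9)]]),
  ([4, 4, 2, 4, 4, 1, 4, 2], [
    [(0, 2, 9), (1, 2, 9), (3, 7, 9), (6, 2, 9), (4, 2, 9), (7, 5, 9), (2, 5, 9)],
    [(0, 2, 1), (0, 1, 9), (6, 7, 9), (1, 3, 1), (1, 2, 9), (4, 7, 9), (3, 7, 9), (7, 5, 9), (2, 5, 9)],
    [(6, 7, 2), (6, 2, 9), (1, 3, 9), (3, 4, 1), (3, 7, 9), (0, 2, 9), (4, 2, 1), (4, 7, 9), (2, 5, 9), (7, 5, 9)],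
    [(6, 7, 1), (6, 2, 9), (0, 2, 9), (3, 1, 9), (4, 7, 9), (1, 2, 9), (2, 5, 9), (7, 5, 9)],
    [(0, 1, 1), (1, 3, 1), (3, 4, 1), (4, 7, 1), (7, 5, 1)]]),
  ([4, 4, 2, 4, 4, 4, 1, 2], [
    [(3, 7, 9), (0, 2, 9), (1, 2, 9), (4, 2, 9), (5, 2, 2), (5, 7, 9), (2, 6, 9), (7, 6, 9)],
    [(5, 7, 9), (0, 2, 1), (0, 1, 9), (1, 3, 9), (3, 7, 1), (3, 4, 9), (4, 7, 1), (4, 2, 9), (2, 6, 9), (7, 6, 9)],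
    [(4, 7, 9), (0, 2, 9), (3, 1, 1), (3, 7, 9), (1, 2, 9), (2, 6, 9), (5, 7, 9), (7, 6, 9)],
    [(4, 3, 9), (5, 2, 1), (5, 7, 9), (1, 3, 1), (1, 2, 9), (0, 2, 9), (3, 7, 9), (7, 6, 9), (2, 6, 9)],
    [(0, 1, 1), (1, 3, 1), (3, 4, 1), (4, 7, 1), (7, 6, 1)],
    [(0, 2, 1), (3, 4, 1), (4, 2, 1), (2, 6, 1)]]),
  ([8, 4, 4, 2, 2, 2, 2, 1], [
    [(0, 2, 2), (0, 1, 9), (1, 3, 9), (2, 5, 9), (4, 7, 9), (6, 7, 9), (5, 7, 9), (3, 7, 9)],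
    [(0, 1, 9), (2, 4, 1), (2, 6, 9), (1, 3, 9), (5, 7, 9), (4, 7, 9), (3, 7, 9), (6, 7, 9)],
    [(0, 2, 9), (2, 6, 1), (2, 4, 9), (1, 3, 9), (5, 7, 9), (6, 7, 9), (4, 7, 9), (3, 7, 9)],
    [(0, 2, 9), (1, 2, 1), (1, 3, 9), (2, 4, 1), (2, 5, 9), (5, 7, 9), (3, 7, 9), (6, 7, 9), (4, 7, 9)],
    [(0, 2, 1), (0, 1, 9), (2, 6, 9), (1, 3, 9), (6, 7, 9), (4, 3, 9), (3, 7, 9), (5, 7, 9)],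
    [(0, 2, 3), (2, 4, 2), (4, 7, 1)]])]

/-- Certificate for `L2`: for each root, the powers `2 ^ dist` and a list of strategies. -/
def dataL2 : List (List ℕ × List (List (ℕ × ℕ × ℕ))) := [
  ([1, 2, 2, 4, 4, 4, 4, 8], [
    [(7, 4, 9), (5, 2, 2), (5, 6, 9), (3, 1, 9), (6, 2, 9), (4, 2, 9), (1, 0, 9), (2, 0, 9)],
    [(5, 2, 9), (7, 3, 2), (7, 6, 9), (4, 2, 9), (3, 1, 9), (6, 2, 9), (1, 0, 9), (2, 0, 9)],
    [(7, 5, 1), (7, 4, 9), (3, 6, 9), (5, 2, 9), (6, 2, 9), (4, 2, 9), (1, 0, 9), (2, 0, 9)],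
    [(7, 4, 1), (7, 6, 9), (5, 6, 9), (6, 3, 1), (6, 2, 9), (3, 1, 1), (3, 4, 9), (4, 2, 9), (2, 0, 9), (1, 0, 9)],
    [(7, 3, 9), (5, 4, 1), (5, 2, 9), (6, 3, 9), (4, 3, 9), (3, 1, 9), (2, 0, 9), (1, 0, 9)],
    [(7, 6, 1), (7, 4, 9), (5, 2, 9), (3, 1, 9), (4, 2, 9), (6, 2, 9), (2, 0, 9), (1, 0, 9)],
    [(7, 5, 9), (4, 3, 1), (4, 2, 9), (6, 3, 1), (6, 2, 9), (5, 2, 9), (3, 1, 9), (1, 0, 9), (2, 0, 9)],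
    [(7, 5, 1), (7, 3, 9), (5, 6, 1), (5, 4, 9), (3, 1, 9), (6, 2, 9), (1, 0, 9), (4, 2, 9), (2, 0, 9)],
    [(7, 3, 1), (7, 5, 1), (3, 6, 1), (5, 2, 1), (6, 2, 1), (2, 0, 1)],
    [(7, 3, 1), (7, 4, 1), (7, 5, 9), (3, 6, 9), (4, 2, 9), (5, 2, 9), (6, 2, 9), (2, 0, 9)],
    [(7, 3, 1), (7, 4, 1), (7, 5, 1), (3, 1, 1), (4, 2, 1), (5, 2, 1), (1, 0, 1), (2, 0, 1)]]),
  ([2, 1, 4, 2, 4, 8, 4, 4], [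
    [(5, 4, 9), (4, 3, 9), (2, 0, 1), (2, 6, 9), (6, 3, 2), (6, 7, 9), (7, 3, 9), (0, 1, 9), (3, 1, 9)],
    [(5, 2, 2), (5, 6, 9), (4, 3, 1), (4, 2, 9), (6, 3, 2), (6, 2, 9), (2, 0, 9), (7, 3, 9), (3, 1, 9), (0, 1, 9)],
    [(5, 7, 1), (5, 6, 9), (7, 3, 9), (2, 6, 9), (6, 3, 9), (4, 3, 9), (0, 1, 9), (3, 1, 9)],
    [(5, 4, 1), (5, 7, 9), (7, 6, 1), (7, 3, 9), (4, 3, 9), (6, 2, 1), (6, 3, 9), (2, 0, 9), (3, 1, 9), (0, 1, 9)],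
    [(5, 6, 2), (5, 4, 9), (7, 4, 2), (7, 3, 9), (6, 3, 2), (6, 2, 9), (4, 2, 9), (2, 0, 9), (3, 1, 9), (0, 1, 9)],
    [(5, 6, 1), (5, 4, 9), (2, 0, 9), (4, 3, 9), (7, 3, 1), (7, 6, 9), (6, 3, 9), (3, 1, 9), (0, 1, 9)],
    [(5, 2, 9), (2, 0, 9), (0, 1, 9)],
    [(5, 7, 1), (5, 4, 9), (6, 3, 9), (2, 4, 2), (2, 0, 9), (4, 3, 9), (7, 3, 9), (0, 1, 9), (3, 1, 9)],
    [(5, 2, 1), (5, 4, 1), (5, 6, 1), (2, 5, 1), (5, 7, 1), (4, 3, 1), (6, 3, 1), (7, 3, 1), (3, 1, 2)],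
    [(5, 2, 1), (5, 4, 1), (5, 6, 1), (2, 0, 1), (4, 3, 1), (6, 3, 1), (0, 1, 1), (3, 1, 1)],
    [(5, 2, 3), (5, 4, 1), (5, 6, 1), (2, 0, 2), (4, 3, 1), (6, 3, 1), (0, 1, 1), (3, 1, 1)],
    [(5, 2, 2), (5, 4, 1), (5, 6, 1), (2, 0, 2), (4, 3, 1), (6, 3, 1), (0, 1, 1), (3, 1, 1)]]),
  ([2, 4, 1, 4, 2, 2, 2, 4], [
    [(3, 6, 9), (1, 0, 9), (7, 6, 9), (4, 2, 9), (0, 2, 9), (5, 2, 1), (5, 6, 9), (6, 2, 9)],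
    [(7, 5, 1), (7, 4, 9), (1, 3, 1), (1, 0, 9), (0, 2, 9), (3, 4, 9), (6, 2, 9), (4, 2, 9), (5, 2, 9)],
    [(3, 1, 1), (1, 0, 1), (3, 4, 1), (0, 2, 1), (4, 2, 1)]]),
  ([4, 2, 4, 1, 2, 4, 2, 2], [
    [(5, 4, 2), (5, 2, 9), (0, 1, 9), (2, 4, 1), (2, 6, 9), (7, 3, 2), (7, 4, 9), (4, 3, 9), (6, 3, 9), (1, 3, 9)],
    [(5, 7, 1), (5, 6, 9), (0, 2, 9), (2, 6, 9), (1, 3, 9), (7, 3, 2), (7, 6, 9), (6, 3, 9), (4, 3, 9)],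
    [(0, 1, 1), (0, 2, 1), (2, 4, 1), (1, 3, 1), (4, 3, 1)]]),
  ([4, 4, 2, 2, 1, 2, 4, 2], [
    [(0, 2, 9), (1, 3, 9), (6, 3, 9), (5, 4, 9), (3, 4, 9), (7, 4, 9), (2, 4, 9)],
    [(6, 5, 1), (6, 3, 9), (1, 0, 1), (1, 3, 9), (0, 2, 9), (5, 4, 1), (5, 2, 9), (7, 4, 9), (2, 4, 9), (3, 4, 9)],
    [(0, 1, 1), (0, 2, 9), (6, 3, 1), (6, 7, 9), (1, 3, 9), (3, 4, 9), (2, 5, 9), (5, 4, 9), (7, 4, 9)]]),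
  ([4, 8, 2, 4, 2, 1, 2, 2], [
    [(1, 0, 2), (1, 3, 9), (3, 6, 9), (0, 2, 9), (7, 5, 9), (6, 5, 9), (4, 5, 9), (2, 5, 9)],
    [(0, 2, 9), (1, 3, 9), (3, 7, 1), (3, 4, 9), (4, 5, 1), (4, 7, 9), (2, 5, 9), (6, 5, 9), (7, 5, 9)],
    [(1, 3, 9), (0, 2, 9), (3, 4, 9), (7, 4, 9), (2, 6, 9), (4, 5, 9), (6, 5, 9)],
    [(1, 0, 1), (1, 3, 9), (3, 6, 9), (0, 2, 9), (6, 5, 1), (6, 7, 9), (7, 4, 9), (2, 4, 2), (2, 5, 9), (4, 5, 9)],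
    [(1, 0, 3), (0, 2, 2), (2, 5, 1)],
    [(1, 3, 1), (0, 1, 1), (1, 3, 1), (3, 4, 1), (4, 5, 1)],
    [(0, 1, 1), (1, 3, 1), (0, 2, 1), (3, 4, 1), (2, 5, 1), (4, 5, 1)]]),
  ([4, 4, 2, 2, 4, 2, 1, 2], [
    [(1, 3, 2), (1, 0, 9), (4, 3, 9), (0, 2, 9), (3, 6, 1), (3, 7, 9), (2, 6, 9), (5, 6, 9), (7, 6, 9)],
    [(0, 1, 1), (0, 2, 9), (1, 3, 9), (4, 7, 1), (4, 2, 9), (5, 2, 9), (3, 6, 9), (2, 6, 9), (7, 6, 9)],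
    [(1, 0, 1), (1, 3, 9), (4, 5, 1), (4, 7, 9), (0, 2, 9), (7, 5, 9), (3, 6, 9), (2, 6, 9), (5, 6, 9)]]),
  ([8, 4, 4, 2, 2, 2, 2, 1], [
    [(0, 2, 2), (0, 1, 9), (1, 3, 9), (2, 6, 9), (5, 7, 9), (4, 7, 9), (6, 7, 1), (6, 3, 9), (3, 7, 9)],
    [(0, 1, 9), (2, 4, 1), (2, 5, 9), (1, 3, 9), (5, 6, 9), (4, 7, 9), (6, 7, 2), (6, 3, 9), (3, 7, 9)],
    [(0, 2, 9), (1, 3, 9), (2, 5, 1), (2, 4, 9), (6, 3, 2), (6, 5, 9), (4, 7, 9), (3, 7, 9), (5, 7, 9)],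
    [(0, 1, 1), (0, 2, 9), (2, 4, 9), (1, 3, 9), (3, 6, 9), (5, 7, 9), (4, 7, 9), (6, 7, 9)],
    [(0, 2, 3), (2, 4, 2), (4, 7, 1)],
    [(0, 2, 1), (1, 0, 1), (0, 2, 1), (2, 4, 1), (4, 5, 1), (5, 6, 1), (6, 7, 1)],
    [(1, 0, 1), (0, 2, 1), (1, 3, 1), (2, 4, 1), (3, 6, 1), (4, 5, 1), (5, 7, 1), (6, 7, 1)]])]

end computation

lemma factsL : Facts lemkeL := facts_of_check (data := dataL) (by decide +kernel)

lemma factsL1 : Facts lemkeL1 := facts_of_check (data := dataL1) (by decide +kernel)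

lemma factsL2 : Facts lemkeL2 := facts_of_check (data := dataL2) (by decide +kernel)

end Peb

/-- for each minimal Lemke graph `G ∈ {L, L₁, L₂}` and `H ∈ {K₁₂, K_{6,6}}`,
`π(G □ H) = 96`. -/
theorem stmt13 :
    ∀ G ∈ ({lemkeL, lemkeL1, lemkeL2} : Set (SimpleGraph (Fin 8))),
      pebblingNumber (G.boxProd (⊤ : SimpleGraph (Fin 12))) = 96 ∧
      pebblingNumber (G.boxProd (completeBipartiteGraph (Fin 6) (Fin 6))) = 96 := by
  intro G hG
  have hF : Peb.Facts G := by
    rcases hG with rfl | rfl | rfl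
    · exact Peb.factsL
    · exact Peb.factsL1
    · exact Peb.factsL2
  exact ⟨Peb.pebbling_top hF, Peb.pebbling_bip hF⟩
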